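/- For every nonnegative integer M and every nonzero complex number q that is not a root of unity, Σ_{m,n≥0} q^{Q(m,n)} (q³;q³)_M / ( (q;q)_m (q³;q³)_n (q³;q³)_{M-2n-m} ) = Σ_{j=-M}^{M} q^{3j²+j} [2M choose M+j]_{q³}. -/

import Mathlib

/-- The finite q-Pochhammer symbol `(a;q)_n`. -/
noncomputable def qPoch (a q : ℂ) (n : ℕ) : ℂ :=
  ∏ j ∈ Finset.range n, (1 - a * q ^ j)

/-- The infinite q-Pochhammer symbol `(a;q)_∞`. -/
noncomputable def qPochInf (a q : ℂ) : ℂ :=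
  ∏' j : ℕ, (1 - a * q ^ j)

/-- `1/(q;q)_n` for an integer `n`, with the convention that it is `0` for `n < 0`. -/
noncomputable def qPochInvZ (q : ℂ) (n : ℤ) : ℂ :=
  if 0 ≤ n then (qPoch q q n.toNat)⁻¹ else 0

/-- The q-trinomial coefficient `(L, b; a; q)_2`. -/
noncomputable def qTrinomial (L : ℕ) (b a : ℤ) (q : ℂ) : ℂ :=
  ∑' n : ℕ, q ^ ((n : ℤ) * ((n : ℤ) + b)) * qPoch q q L * qPochInvZ q (n : ℤ) *
    qPochInvZ q ((n : ℤ) + a) * qPochInvZ q ((L : ℤ) - 2 * (n : ℤ) - a)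

/-- The q-trinomial coefficient `T_n(L, a; q)`, where `s` is a fixed square root of `q`. -/
noncomputable def qTriT (n : ℤ) (L : ℕ) (a : ℤ) (q s : ℂ) : ℂ :=
  s ^ ((L : ℤ) * ((L : ℤ) - n) - a * (a - n)) * qTrinomial L (a - n) a q⁻¹

/-- The Gaussian (q-binomial) coefficient `[N choose k]_q`, zero unless `0 ≤ k ≤ N`. -/
noncomputable def qBinom (N k : ℤ) (q : ℂ) : ℂ :=
  if 0 ≤ k ∧ k ≤ N then
    qPoch q q N.toNat * (qPoch q q k.toNat)⁻¹ * (qPoch q q (N - k).toNat)⁻¹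
  else 0

/-- The quadratic form `Q(m,n) = 2m² + 6mn + 6n²` from Capparelli's theorems. -/
def Qcap (m n : ℕ) : ℕ := 2 * m ^ 2 + 6 * m * n + 6 * n ^ 2

/-!
Comparing coefficients in `(-t; q)_∞ = (-t; q³)_∞ (-tq; q³)_∞ (-tq²; q³)_∞`, both sides expanded by
Euler's identity, writes `1 / (q; q)_m` as a sum over `x + y + z = m` of terms with denominator
`(q³; q³)_x (q³; q³)_y (q³; q³)_z`; since only `q`-difference equations are compared, no convergence
is involved. Substituted into the double sum, this makes everything base `q³`. The quadratic
exponent is such that the sum over `n` with `a = z + n` and `b = x + n` fixed counts Durfee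
rectangles, and the sum over `y` with `r = a + y` and `s = b + y` fixed is a `q`-Vandermonde sum.
What remains is a sum of products of two `q³`-binomial coefficients, which for fixed `j = r - s` is
once more a `q`-Vandermonde sum, with value `[2M choose M + j]`.

All sums run over all integers as `finsum`s: the convention `1 / (q; q)_n = 0` for `n < 0` makes
them finite, and changes of variables then need no summation bounds.
-/

section Finsum

variable {α β γ A : Type*} [AddCommMonoid A]

theorem finsum_eq_finsum_of_fiberwise (e : α × β ≃ γ) {f : γ → A} {g : α → A}
    (hf : f.HasFiniteSupport) (h : ∀ a, ∑ᶠ b, f (e (a, b)) = g a) : ∑ᶠ c, f c = ∑ᶠ a, g a := by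
  rw [← finsum_comp_equiv e, finsum_curry _ (hf.fun_comp_of_injective e.injective)]
  exact finsum_congr h

theorem finsum_rotate (m : ℤ) (f : ℤ → ℤ → ℤ → A) :
    ∑ᶠ w : ℤ × ℤ, f (m - w.1 - w.2) w.1 w.2 = ∑ᶠ w : ℤ × ℤ, f w.1 w.2 (m - w.1 - w.2) := by
  let e : ℤ × ℤ ≃ ℤ × ℤ :=
    { toFun := fun w ↦ (w.2, m - w.1 - w.2)
      invFun := fun w ↦ (m - w.1 - w.2, w.1)
      left_inv := fun w ↦ by ext <;> simp
      right_inv := fun w ↦ by ext <;> simp [sub_right_comm] }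
  rw [← finsum_comp_equiv e]
  refine finsum_congr fun w ↦ ?_
  simp only [e, Equiv.coe_fn_mk]
  congr 1
  ring

theorem tsum_tsum_natCast_eq_finsum [TopologicalSpace A] [ContinuousAdd A] [T3Space A]
    {f : ℤ × ℤ → A} (hf : f.HasFiniteSupport) (hnonneg : ∀ w, f w ≠ 0 → 0 ≤ w) :
    ∑' (m : ℕ) (n : ℕ), f (m, n) = ∑ᶠ w, f w := by
  have hcast : Function.Injective (Prod.map Nat.cast Nat.cast : ℕ × ℕ → ℤ × ℤ) :=
    Nat.cast_injective.prodMap Nat.cast_injective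
  have hrange : f.support ⊆ Set.range (Prod.map Nat.cast Nat.cast : ℕ × ℕ → ℤ × ℤ) := fun w hw ↦
    ⟨(w.1.toNat, w.2.toNat), Prod.ext (Int.toNat_of_nonneg (hnonneg w hw).1)
      (Int.toNat_of_nonneg (hnonneg w hw).2)⟩
  rw [← tsum_eq_finsum (L := .unconditional _) hf, ← hcast.tsum_eq hrange]
  have hfin := hf.fun_comp_of_injective hcast
  have hfiber (m : ℕ) := hf.fun_comp_of_injective (hcast.comp (Prod.mk_right_injective m))
  exact ((summable_of_hasFiniteSupport hfin).tsum_prod' fun m ↦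
    summable_of_hasFiniteSupport (hfiber m)).symm

end Finsum

section QPochhammer

variable {q : ℂ}

theorem qPoch_self_succ (q : ℂ) (n : ℕ) :
    qPoch q q (n + 1) = qPoch q q n * (1 - q ^ (n + 1)) := by
  rw [qPoch, Finset.prod_range_succ, ← pow_succ', qPoch]

theorem one_sub_pow_ne_zero (hroot : ¬IsOfFinOrder q) {n : ℕ} (hn : 0 < n) : 1 - q ^ n ≠ 0 :=
  sub_ne_zero.mpr fun h ↦ hroot (isOfFinOrder_iff_pow_eq_one.mpr ⟨n, hn, h.symm⟩)

theorem qPoch_self_ne_zero (hroot : ¬IsOfFinOrder q) (n : ℕ) : qPoch q q n ≠ 0 := by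
  refine Finset.prod_ne_zero_iff.mpr fun j _ ↦ ?_
  rw [← pow_succ']
  exact one_sub_pow_ne_zero hroot j.succ_pos

theorem qPochInvZ_natCast (q : ℂ) (n : ℕ) : qPochInvZ q n = (qPoch q q n)⁻¹ := by
  simp [qPochInvZ]

theorem qPochInvZ_of_neg (q : ℂ) {k : ℤ} (hk : k < 0) : qPochInvZ q k = 0 :=
  if_neg hk.not_ge

theorem nonneg_of_qPochInvZ_ne_zero {k : ℤ} (h : qPochInvZ q k ≠ 0) : 0 ≤ k :=
  not_lt.mp fun hk ↦ h (qPochInvZ_of_neg q hk)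

theorem qPochInvZ_zero (q : ℂ) : qPochInvZ q 0 = 1 := by
  simp [qPochInvZ, qPoch]

theorem one_sub_zpow_mul_qPochInvZ (hroot : ¬IsOfFinOrder q) (k : ℤ) :
    (1 - q ^ k) * qPochInvZ q k = qPochInvZ q (k - 1) := by
  rcases lt_or_ge k 0 with hk | hk
  · rw [qPochInvZ_of_neg q hk, qPochInvZ_of_neg q (by lia), mul_zero]
  lift k to ℕ using hk
  cases k with
  | zero => simp [qPochInvZ_of_neg]
  | succ n =>
    have hn := one_sub_pow_ne_zero hroot n.succ_pos
    rw [Nat.cast_succ, add_sub_cancel_right, ← Nat.cast_succ, zpow_natCast, qPochInvZ_natCast,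
      qPochInvZ_natCast, qPoch_self_succ]
    field_simp

theorem eq_qPochInvZ_of_recurrence (hroot : ¬IsOfFinOrder q) {f : ℤ → ℂ}
    (hneg : ∀ k < 0, f k = 0) (hzero : f 0 = 1) (hrec : ∀ k, (1 - q ^ k) * f k = f (k - 1))
    (k : ℤ) : f k = qPochInvZ q k := by
  rcases lt_or_ge k 0 with hk | hk
  · rw [hneg k hk, qPochInvZ_of_neg q hk]
  lift k to ℕ using hk
  induction k with
  | zero => rw [Nat.cast_zero, hzero, qPochInvZ_zero]
  | succ n ih =>
    have hn : 1 - q ^ ((n + 1 : ℕ) : ℤ) ≠ 0 := by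
      rw [zpow_natCast]
      exact one_sub_pow_ne_zero hroot n.succ_pos
    refine mul_left_cancel₀ hn ?_
    rw [hrec, one_sub_zpow_mul_qPochInvZ hroot, Nat.cast_succ, add_sub_cancel_right, ih]

end QPochhammer

section QBinomial

variable {q : ℂ}

theorem qBinom_natCast_left (q : ℂ) (N : ℕ) (k : ℤ) :
    qBinom N k q = qPoch q q N * qPochInvZ q k * qPochInvZ q (N - k) := by
  rw [qBinom]
  split_ifs with h
  · rw [qPochInvZ, qPochInvZ, if_pos h.1, if_pos (by lia), Int.toNat_natCast]
  · rcases lt_or_ge k 0 with hk | hk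
    · simp [qPochInvZ_of_neg q hk]
    · simp [qPochInvZ_of_neg q (show (N : ℤ) - k < 0 by lia)]

theorem mem_Icc_of_qBinom_ne_zero {N k : ℤ} (h : qBinom N k q ≠ 0) : k ∈ Set.Icc 0 N := by
  by_contra hk
  exact h (if_neg hk)

theorem hasFiniteSupport_qBinom (N : ℤ) (q : ℂ) :
    (fun k ↦ qBinom N k q).HasFiniteSupport :=
  (Set.finite_Icc 0 N).subset fun _ ↦ mem_Icc_of_qBinom_ne_zero

theorem qBinom_symm (q : ℂ) (N : ℕ) (k : ℤ) : qBinom N (N - k) q = qBinom N k q := by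
  rw [qBinom_natCast_left, qBinom_natCast_left, sub_sub_cancel]
  ring

theorem qBinom_zero_zero (q : ℂ) : qBinom 0 0 q = 1 := by
  simp [qBinom, qPoch]

theorem qBinom_succ (hq : q ≠ 0) (hroot : ¬IsOfFinOrder q) (N : ℕ) (k : ℤ) :
    qBinom (N + 1) k q = qBinom N (k - 1) q + q ^ k * qBinom N k q := by
  have hlower := one_sub_zpow_mul_qPochInvZ hroot k
  have hupper := one_sub_zpow_mul_qPochInvZ hroot (N + 1 - k)
  have hpow : q ^ (N + 1) = q ^ k * q ^ ((N : ℤ) + 1 - k) := by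
    rw [← zpow_add₀ hq, add_sub_cancel]
    exact_mod_cast (zpow_natCast q (N + 1)).symm
  rw [sub_right_comm, add_sub_cancel_right] at hupper
  rw [← Nat.cast_succ, qBinom_natCast_left, qBinom_natCast_left, qBinom_natCast_left,
    qPoch_self_succ, hpow, ← hlower, ← hupper, Nat.cast_succ, sub_sub_eq_add_sub]
  ring

theorem finsum_qBinom_mul_of_pascal (hq : q ≠ 0) (hroot : ¬IsOfFinOrder q) {g : ℕ → ℤ → ℂ}
    (hg : ∀ A B, g (A + 1) B = g A (B - 1) + q ^ B * g A B) (A : ℕ) (B : ℤ) :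
    ∑ᶠ k : ℤ, qBinom A k q * (q ^ ((A - k) * (B - k)) * g 0 (B - k)) = g A B := by
  induction A generalizing B with
  | zero =>
    rw [finsum_eq_single _ 0]
    · simp [qBinom_zero_zero]
    · intro k hk
      have : qBinom (0 : ℕ) k q = 0 := if_neg (by lia)
      rw [this, zero_mul]
  | succ A ih =>
    have hshift : ∑ᶠ k : ℤ, qBinom A (k - 1) q * (q ^ ((A + 1 - k) * (B - k)) * g 0 (B - k)) =
        g A (B - 1) := by
      rw [← ih, ← finsum_comp_equiv (Equiv.addRight (1 : ℤ))]
      simp only [Equiv.coe_addRight, add_sub_cancel_right,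
        sub_add_eq_sub_sub_swap]
    have hscale : ∑ᶠ k : ℤ, qBinom A k q * (q ^ k * q ^ ((A + 1 - k) * (B - k)) * g 0 (B - k)) =
        q ^ B * g A B := by
      rw [← ih, mul_finsum]
      refine finsum_congr fun k ↦ ?_
      have hexp : q ^ k * q ^ ((A + 1 - k) * (B - k)) = q ^ B * q ^ ((A - k) * (B - k)) := by
        rw [← zpow_add₀ hq, ← zpow_add₀ hq]
        ring_nf
      rw [hexp]
      ring
    rw [hg, ← hshift, ← hscale, ← finsum_add_distrib]
    · refine finsum_congr fun k ↦ ?_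
      rw [Nat.cast_succ, qBinom_succ hq hroot]
      ring
    · exact ((hasFiniteSupport_qBinom A q).comp_of_injective
        (Equiv.subRight 1).injective).mul_left _
    · exact (hasFiniteSupport_qBinom A q).mul_left _

theorem qBinom_vandermonde (hq : q ≠ 0) (hroot : ¬IsOfFinOrder q) (A N : ℕ) (B : ℤ) :
    ∑ᶠ k : ℤ, qBinom A k q * (q ^ ((A - k) * (B - k)) * qBinom N (B - k) q) =
      qBinom (N + A) B q := by
  have hpascal (A : ℕ) (B : ℤ) : qBinom (N + (A + 1 : ℕ)) B q =
      qBinom (N + A) (B - 1) q + q ^ B * qBinom (N + A) B q := by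
    exact_mod_cast qBinom_succ hq hroot (N + A) B
  simpa using finsum_qBinom_mul_of_pascal hq hroot (g := fun A B ↦ qBinom (N + A) B q) hpascal A B

theorem finsum_durfee_rectangle (hq : q ≠ 0) (hroot : ¬IsOfFinOrder q) (a b : ℤ) :
    ∑ᶠ n : ℤ, q ^ ((a - n) * (b - n)) * qPochInvZ q (a - n) * qPochInvZ q (b - n) *
      qPochInvZ q n = qPochInvZ q a * qPochInvZ q b := by
  rcases lt_or_ge a 0 with ha | ha
  · rw [qPochInvZ_of_neg q ha, zero_mul]
    refine finsum_eq_zero_of_forall_eq_zero fun n ↦ ?_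
    rcases lt_or_ge n 0 with hn | hn
    · rw [qPochInvZ_of_neg q hn, mul_zero]
    · rw [qPochInvZ_of_neg q (by lia : a - n < 0)]
      ring
  lift a to ℕ using ha
  have hpascal (_ : ℕ) (B : ℤ) : qPochInvZ q B = qPochInvZ q (B - 1) + q ^ B * qPochInvZ q B := by
    rw [← one_sub_zpow_mul_qPochInvZ hroot]
    ring
  have ha := qPoch_self_ne_zero hroot a
  rw [← finsum_qBinom_mul_of_pascal hq hroot (g := fun _ B ↦ qPochInvZ q B) hpascal a b,
    qPochInvZ_natCast, mul_finsum]
  refine finsum_congr fun n ↦ ?_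
  rw [qBinom_natCast_left]
  field_simp

theorem finsum_qPochInvZ_eq_qBinom_mul_qBinom (hq : q ≠ 0) (hroot : ¬IsOfFinOrder q) (M : ℕ)
    (r s : ℤ) :
    ∑ᶠ y : ℤ, qPoch q q M * q ^ ((r - y) * (s - y)) * qPochInvZ q (r - y) * qPochInvZ q (s - y) *
      qPochInvZ q y * qPochInvZ q (M - r - s + y) = qBinom M r q * qBinom M s q := by
  by_cases hr : 0 ≤ r ∧ r ≤ M
  · lift r to ℕ using hr.1
    obtain ⟨N, rfl⟩ := Nat.exists_eq_add_of_le' (Int.ofNat_le.mp hr.2)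
    have hr' := qPoch_self_ne_zero hroot r
    have hN := qPoch_self_ne_zero hroot N
    have hcancel : ((N + r : ℕ) : ℤ) - r = N := by simp
    nth_rw 3 [Nat.cast_add]
    rw [← qBinom_vandermonde hq hroot, mul_finsum]
    refine finsum_congr fun y ↦ ?_
    simp only [qBinom_natCast_left, hcancel, qPochInvZ_natCast, ← sub_add]
    field_simp
  · rw [qBinom, if_neg hr, zero_mul]
    refine finsum_eq_zero_of_forall_eq_zero fun y ↦ ?_
    by_contra hne
    simp only [mul_ne_zero_iff] at hne
    obtain ⟨⟨⟨⟨-, hry⟩, hsy⟩, hy⟩, hM⟩ := hne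
    have := nonneg_of_qPochInvZ_ne_zero hry
    have := nonneg_of_qPochInvZ_ne_zero hsy
    have := nonneg_of_qPochInvZ_ne_zero hy
    have := nonneg_of_qPochInvZ_ne_zero hM
    lia

end QBinomial

section Trisection

variable {q : ℂ}

/-- The coefficient, indexed by `x + y + z = m`, of `t ^ m` in
`(-t; q³)_∞ (-tq; q³)_∞ (-tq²; q³)_∞ = (-t; q)_∞` after expanding each factor by Euler's identity,
divided by the power `q ^ (m * (m - 1) / 2)` that Euler's identity attaches to `1 / (q; q)_m`. -/
noncomputable def trisectionWeight (q : ℂ) (x y z : ℤ) : ℂ :=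
  q ^ (x ^ 2 + y ^ 2 + z ^ 2 - x * y - y * z - z * x + z - x) *
    qPochInvZ (q ^ 3) x * qPochInvZ (q ^ 3) y * qPochInvZ (q ^ 3) z

theorem nonneg_of_trisectionWeight_ne_zero {x y z : ℤ} (h : trisectionWeight q x y z ≠ 0) :
    0 ≤ x ∧ 0 ≤ y ∧ 0 ≤ z := by
  simp only [trisectionWeight, mul_ne_zero_iff] at h
  exact ⟨nonneg_of_qPochInvZ_ne_zero h.1.1.2, nonneg_of_qPochInvZ_ne_zero h.1.2,
    nonneg_of_qPochInvZ_ne_zero h.2⟩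

theorem cube_zpow (q : ℂ) (k : ℤ) : (q ^ 3) ^ k = q ^ (3 * k) := by
  rw [zpow_mul]
  norm_cast

theorem zpow_mul_trisectionWeight_rotate (hq : q ≠ 0) (x y z : ℤ) :
    q ^ (x + y + z) * trisectionWeight q y z x = (q ^ 3) ^ x * trisectionWeight q x y z := by
  have hexp : q ^ (x + y + z) *
      q ^ (y ^ 2 + z ^ 2 + x ^ 2 - y * z - z * x - x * y + x - y) =
      q ^ (3 * x) * q ^ (x ^ 2 + y ^ 2 + z ^ 2 - x * y - y * z - z * x + z - x) := by
    rw [← zpow_add₀ hq, ← zpow_add₀ hq]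
    ring_nf
  rw [trisectionWeight, trisectionWeight, cube_zpow]
  linear_combination qPochInvZ (q ^ 3) x * qPochInvZ (q ^ 3) y * qPochInvZ (q ^ 3) z * hexp

theorem one_sub_zpow_mul_trisectionWeight (hroot : ¬IsOfFinOrder (q ^ 3)) (x y z : ℤ) :
    (1 - (q ^ 3) ^ x) * trisectionWeight q x y z = trisectionWeight q y z (x - 1) := by
  rw [trisectionWeight, trisectionWeight, ← one_sub_zpow_mul_qPochInvZ hroot x]
  ring_nf

theorem hasFiniteSupport_trisectionWeight (q : ℂ) (m : ℤ) :
    (fun w : ℤ × ℤ ↦ trisectionWeight q (m - w.1 - w.2) w.1 w.2).HasFiniteSupport := by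
  refine (Set.finite_Icc (0, 0) (m, m)).subset fun w hw ↦ ?_
  obtain ⟨hx, hy, hz⟩ := nonneg_of_trisectionWeight_ne_zero hw
  simp only [Set.mem_Icc, Prod.le_def]
  lia

theorem one_sub_zpow_mul_finsum_trisectionWeight (hq : q ≠ 0) (hroot : ¬IsOfFinOrder (q ^ 3))
    (m : ℤ) :
    (1 - q ^ m) * ∑ᶠ w : ℤ × ℤ, trisectionWeight q (m - w.1 - w.2) w.1 w.2 =
      ∑ᶠ w : ℤ × ℤ, trisectionWeight q (m - 1 - w.1 - w.2) w.1 w.2 := by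
  have hfin := hasFiniteSupport_trisectionWeight q m
  have hfin_mul : (fun w : ℤ × ℤ ↦ (q ^ 3) ^ (m - w.1 - w.2) *
      trisectionWeight q (m - w.1 - w.2) w.1 w.2).HasFiniteSupport := hfin.mul_right _
  have hmul : q ^ m * ∑ᶠ w : ℤ × ℤ, trisectionWeight q (m - w.1 - w.2) w.1 w.2 =
      ∑ᶠ w : ℤ × ℤ, (q ^ 3) ^ (m - w.1 - w.2) * trisectionWeight q (m - w.1 - w.2) w.1 w.2 := by
    rw [finsum_rotate m, mul_finsum]
    refine finsum_congr fun w ↦ ?_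
    have hm : m - w.1 - w.2 + w.1 + w.2 = m := by ring
    rw [← zpow_mul_trisectionWeight_rotate hq, hm]
  rw [sub_mul, one_mul, hmul, ← finsum_sub_distrib hfin hfin_mul, finsum_rotate (m - 1)]
  refine finsum_congr fun w ↦ ?_
  rw [← one_sub_mul, one_sub_zpow_mul_trisectionWeight hroot]
  ring_nf

theorem finsum_trisectionWeight (hq : q ≠ 0) (hroot : ¬IsOfFinOrder q) (m : ℤ) :
    ∑ᶠ w : ℤ × ℤ, trisectionWeight q (m - w.1 - w.2) w.1 w.2 = qPochInvZ q m := by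
  refine eq_qPochInvZ_of_recurrence hroot
    (f := fun m ↦ ∑ᶠ w : ℤ × ℤ, trisectionWeight q (m - w.1 - w.2) w.1 w.2) (fun k hk ↦ ?_) ?_
    (one_sub_zpow_mul_finsum_trisectionWeight hq fun h ↦ hroot (h.of_pow three_ne_zero)) m
  · refine finsum_eq_zero_of_forall_eq_zero fun w ↦ ?_
    by_contra hw
    have := nonneg_of_trisectionWeight_ne_zero hw
    lia
  · rw [finsum_eq_single _ (0, 0)]
    · simp [trisectionWeight, qPochInvZ_zero]
    · rintro ⟨y, z⟩ hyz
      by_contra hw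
      have := nonneg_of_trisectionWeight_ne_zero hw
      exact hyz (Prod.ext (by lia) (by lia))

end Trisection

section Capparelli

variable {q : ℂ}

/-- The summand `(m, n)` on the sum side of Capparelli's identity, over all integers. -/
noncomputable def capparelliSummand (q : ℂ) (M : ℕ) : ℤ × ℤ → ℂ
  | (m, n) => qPoch (q ^ 3) (q ^ 3) M * q ^ (2 * m ^ 2 + 6 * m * n + 6 * n ^ 2) *
      qPochInvZ q m * qPochInvZ (q ^ 3) n * qPochInvZ (q ^ 3) (M - 2 * n - m)

/-- The refinement of `capparelliSummand` obtained by expanding `1 / (q; q)_m` into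
`trisectionWeight`s over `m = x + y + z`. -/
noncomputable def trisectedSummand (q : ℂ) (M : ℕ) : ℤ × ℤ × ℤ × ℤ → ℂ
  | (x, y, z, n) => qPoch (q ^ 3) (q ^ 3) M *
      q ^ (2 * (x + y + z) ^ 2 + 6 * (x + y + z) * n + 6 * n ^ 2) * trisectionWeight q x y z *
        qPochInvZ (q ^ 3) n * qPochInvZ (q ^ 3) (M - 2 * n - (x + y + z))

/-- The summand left after summing `trisectedSummand` over `n` with `a = z + n`, `b = x + n`
and `y` fixed: a `q³`-multinomial coefficient weighted by a power of `q`. -/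
noncomputable def multinomialSummand (q : ℂ) (M : ℕ) : ℤ × ℤ × ℤ → ℂ
  | (a, b, y) => qPoch (q ^ 3) (q ^ 3) M *
      q ^ (3 * (a ^ 2 + b ^ 2 + y ^ 2 + a * y + b * y) + a - b) *
        (qPochInvZ (q ^ 3) a * qPochInvZ (q ^ 3) b) * qPochInvZ (q ^ 3) y *
          qPochInvZ (q ^ 3) (M - a - b - y)

/-- The summand left after summing `multinomialSummand` over `y` with `r = a + y` and `s = b + y`
fixed: a product of two `q³`-binomial coefficients weighted by a power of `q`. -/
noncomputable def binomialSummand (q : ℂ) (M : ℕ) : ℤ × ℤ → ℂ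
  | (r, s) => q ^ (3 * (r ^ 2 + s ^ 2 - r * s) + r - s) *
      (qBinom M r (q ^ 3) * qBinom M s (q ^ 3))

theorem nonneg_of_capparelliSummand_ne_zero {M : ℕ} {m n : ℤ}
    (h : capparelliSummand q M (m, n) ≠ 0) : 0 ≤ m ∧ 0 ≤ n ∧ 0 ≤ M - 2 * n - m := by
  simp only [capparelliSummand, mul_ne_zero_iff] at h
  exact ⟨nonneg_of_qPochInvZ_ne_zero h.1.1.2, nonneg_of_qPochInvZ_ne_zero h.1.2,
    nonneg_of_qPochInvZ_ne_zero h.2⟩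

theorem hasFiniteSupport_capparelliSummand (q : ℂ) (M : ℕ) :
    (capparelliSummand q M).HasFiniteSupport := by
  refine (Set.finite_Icc (0, 0) ((M : ℤ), (M : ℤ))).subset fun ⟨m, n⟩ hw ↦ ?_
  have := nonneg_of_capparelliSummand_ne_zero hw
  simp only [Set.mem_Icc, Prod.mk_le_mk]
  lia

theorem hasFiniteSupport_trisectedSummand (q : ℂ) (M : ℕ) :
    (trisectedSummand q M).HasFiniteSupport := by
  refine (Set.finite_Icc (0, 0, 0, 0) ((M : ℤ), (M : ℤ), (M : ℤ), (M : ℤ))).subset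
    fun ⟨x, y, z, n⟩ hw ↦ ?_
  simp only [Function.mem_support, trisectedSummand, mul_ne_zero_iff] at hw
  obtain ⟨⟨⟨-, hxyz⟩, hn⟩, hM⟩ := hw
  have := nonneg_of_trisectionWeight_ne_zero hxyz
  have := nonneg_of_qPochInvZ_ne_zero hn
  have := nonneg_of_qPochInvZ_ne_zero hM
  simp only [Set.mem_Icc, Prod.mk_le_mk]
  lia

theorem hasFiniteSupport_multinomialSummand (q : ℂ) (M : ℕ) :
    (multinomialSummand q M).HasFiniteSupport := by
  refine (Set.finite_Icc (0, 0, 0) ((M : ℤ), (M : ℤ), (M : ℤ))).subset fun ⟨a, b, y⟩ hw ↦ ?_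
  simp only [Function.mem_support, multinomialSummand, mul_ne_zero_iff] at hw
  obtain ⟨⟨⟨-, ha, hb⟩, hy⟩, hM⟩ := hw
  have := nonneg_of_qPochInvZ_ne_zero ha
  have := nonneg_of_qPochInvZ_ne_zero hb
  have := nonneg_of_qPochInvZ_ne_zero hy
  have := nonneg_of_qPochInvZ_ne_zero hM
  simp only [Set.mem_Icc, Prod.mk_le_mk]
  lia

theorem hasFiniteSupport_binomialSummand (q : ℂ) (M : ℕ) :
    (binomialSummand q M).HasFiniteSupport := by
  refine (Set.finite_Icc (0, 0) ((M : ℤ), (M : ℤ))).subset fun ⟨r, s⟩ hw ↦ ?_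
  simp only [Function.mem_support, binomialSummand, mul_ne_zero_iff] at hw
  obtain ⟨-, hr, hs⟩ := hw
  exact ⟨⟨(mem_Icc_of_qBinom_ne_zero hr).1, (mem_Icc_of_qBinom_ne_zero hs).1⟩,
    ⟨(mem_Icc_of_qBinom_ne_zero hr).2, (mem_Icc_of_qBinom_ne_zero hs).2⟩⟩

theorem finsum_trisectedSummand_eq_capparelli (hq : q ≠ 0) (hroot : ¬IsOfFinOrder q) (M : ℕ) :
    ∑ᶠ w, trisectedSummand q M w = ∑ᶠ w, capparelliSummand q M w := by
  let e : (ℤ × ℤ) × (ℤ × ℤ) ≃ ℤ × ℤ × ℤ × ℤ :=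
    { toFun := fun ((m, n), (y, z)) ↦ (m - y - z, y, z, n)
      invFun := fun (x, y, z, n) ↦ ((x + y + z, n), (y, z))
      left_inv := fun ((m, n), (y, z)) ↦ by simp [sub_sub, add_assoc]
      right_inv := fun (x, y, z, n) ↦ by simp [sub_sub, add_assoc] }
  refine finsum_eq_finsum_of_fiberwise e (hasFiniteSupport_trisectedSummand q M) fun (m, n) ↦ ?_
  rw [capparelliSummand, ← finsum_trisectionWeight hq hroot, mul_finsum, finsum_mul, finsum_mul]
  refine finsum_congr fun (y, z) ↦ ?_
  have hm : m - y - z + y + z = m := by ring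
  simp only [e, Equiv.coe_fn_mk, trisectedSummand, hm]

theorem finsum_trisectedSummand_eq_multinomial (hq : q ≠ 0) (hroot : ¬IsOfFinOrder (q ^ 3))
    (M : ℕ) : ∑ᶠ w, trisectedSummand q M w = ∑ᶠ w, multinomialSummand q M w := by
  let e : (ℤ × ℤ × ℤ) × ℤ ≃ ℤ × ℤ × ℤ × ℤ :=
    { toFun := fun ((a, b, y), n) ↦ (b - n, y, a - n, n)
      invFun := fun (x, y, z, n) ↦ ((z + n, x + n, y), n)
      left_inv := fun ((a, b, y), n) ↦ by simp
      right_inv := fun (x, y, z, n) ↦ by simp }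
  refine finsum_eq_finsum_of_fiberwise e (hasFiniteSupport_trisectedSummand q M) fun (a, b, y) ↦ ?_
  rw [multinomialSummand, ← finsum_durfee_rectangle (pow_ne_zero 3 hq) hroot, mul_finsum,
    finsum_mul, finsum_mul]
  refine finsum_congr fun n ↦ ?_
  have hexp : q ^ (2 * (b - n + y + (a - n)) ^ 2 + 6 * (b - n + y + (a - n)) * n + 6 * n ^ 2) *
      q ^ ((b - n) ^ 2 + y ^ 2 + (a - n) ^ 2 - (b - n) * y - y * (a - n) - (a - n) * (b - n) +
        (a - n) - (b - n)) =
      q ^ (3 * (a ^ 2 + b ^ 2 + y ^ 2 + a * y + b * y) + a - b) *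
        q ^ (3 * ((a - n) * (b - n))) := by
    rw [← zpow_add₀ hq, ← zpow_add₀ hq]
    ring_nf
  have hM : M - 2 * n - (b - n + y + (a - n)) = M - a - b - y := by ring
  simp only [e, Equiv.coe_fn_mk, trisectedSummand, trisectionWeight, cube_zpow, hM]
  linear_combination qPoch (q ^ 3) (q ^ 3) M * qPochInvZ (q ^ 3) (b - n) * qPochInvZ (q ^ 3) y *
    qPochInvZ (q ^ 3) (a - n) * qPochInvZ (q ^ 3) n * qPochInvZ (q ^ 3) (M - a - b - y) * hexp

theorem finsum_multinomialSummand_eq_binomial (hq : q ≠ 0) (hroot : ¬IsOfFinOrder (q ^ 3))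
    (M : ℕ) : ∑ᶠ w, multinomialSummand q M w = ∑ᶠ w, binomialSummand q M w := by
  let e : (ℤ × ℤ) × ℤ ≃ ℤ × ℤ × ℤ :=
    { toFun := fun ((r, s), y) ↦ (r - y, s - y, y)
      invFun := fun (a, b, y) ↦ ((a + y, b + y), y)
      left_inv := fun ((r, s), y) ↦ by simp
      right_inv := fun (a, b, y) ↦ by simp }
  refine finsum_eq_finsum_of_fiberwise e (hasFiniteSupport_multinomialSummand q M) fun (r, s) ↦ ?_
  rw [binomialSummand, ← finsum_qPochInvZ_eq_qBinom_mul_qBinom (pow_ne_zero 3 hq) hroot,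
    mul_finsum]
  refine finsum_congr fun y ↦ ?_
  have hexp : q ^ (3 * ((r - y) ^ 2 + (s - y) ^ 2 + y ^ 2 + (r - y) * y + (s - y) * y) +
      (r - y) - (s - y)) =
      q ^ (3 * (r ^ 2 + s ^ 2 - r * s) + r - s) * q ^ (3 * ((r - y) * (s - y))) := by
    rw [← zpow_add₀ hq]
    ring_nf
  have hM : M - (r - y) - (s - y) - y = M - r - s + y := by ring
  simp only [e, Equiv.coe_fn_mk, multinomialSummand, cube_zpow, hexp, hM]
  ring

theorem finsum_binomialSummand (hq : q ≠ 0) (hroot : ¬IsOfFinOrder (q ^ 3)) (M : ℕ) :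
    ∑ᶠ w, binomialSummand q M w =
      ∑ᶠ j : ℤ, q ^ (3 * j ^ 2 + j) * qBinom (2 * M) (M + j) (q ^ 3) := by
  let e : ℤ × ℤ ≃ ℤ × ℤ :=
    { toFun := fun (j, k) ↦ (M + j - k, M - k)
      invFun := fun (r, s) ↦ (r - s, M - s)
      left_inv := fun (j, k) ↦ by simp
      right_inv := fun (r, s) ↦ by simp }
  refine finsum_eq_finsum_of_fiberwise e (hasFiniteSupport_binomialSummand q M) fun j ↦ ?_
  rw [two_mul, ← qBinom_vandermonde (pow_ne_zero 3 hq) hroot, mul_finsum]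
  refine finsum_congr fun k ↦ ?_
  have hexp : q ^ (3 * ((M + j - k) ^ 2 + (M - k) ^ 2 - (M + j - k) * (M - k)) +
      (M + j - k) - (M - k)) = q ^ (3 * j ^ 2 + j) * q ^ (3 * ((M - k) * (M + j - k))) := by
    rw [← zpow_add₀ hq]
    ring_nf
  simp only [e, Equiv.coe_fn_mk, binomialSummand, cube_zpow, hexp, qBinom_symm]
  ring

theorem tsum_eq_finsum_capparelliSummand (q : ℂ) (M : ℕ) :
    ∑' (m : ℕ) (n : ℕ), q ^ Qcap m n * qPoch (q ^ 3) (q ^ 3) M * (qPoch q q m)⁻¹ *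
      (qPoch (q ^ 3) (q ^ 3) n)⁻¹ * qPochInvZ (q ^ 3) ((M : ℤ) - 2 * n - m) =
        ∑ᶠ w, capparelliSummand q M w := by
  rw [← tsum_tsum_natCast_eq_finsum (hasFiniteSupport_capparelliSummand q M) fun (m, n) hw ↦
    have h := nonneg_of_capparelliSummand_ne_zero hw
    ⟨h.1, h.2.1⟩]
  refine tsum_congr fun m ↦ tsum_congr fun n ↦ ?_
  have hQ : (2 * m ^ 2 + 6 * m * n + 6 * n ^ 2 : ℤ) = (Qcap m n : ℕ) := by simp [Qcap]
  rw [capparelliSummand, hQ, zpow_natCast, qPochInvZ_natCast, qPochInvZ_natCast, mul_comm (q ^ _)]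

theorem finsum_mul_qBinom_eq_sum_Icc (p : ℂ) (M : ℕ) (f : ℤ → ℂ) :
    ∑ᶠ j : ℤ, f j * qBinom (2 * M) (M + j) p =
      ∑ j ∈ Finset.Icc (-(M : ℤ)) M, f j * qBinom (2 * M) (M + j) p := by
  refine finsum_eq_sum_of_support_subset _ fun j hj ↦ ?_
  have := mem_Icc_of_qBinom_ne_zero (right_ne_zero_of_mul hj)
  simp only [Finset.coe_Icc, Set.mem_Icc] at this ⊢
  lia

end Capparelli

theorem finite_capparelli_one (M : ℕ) (q : ℂ) (hq : q ≠ 0) (hroot : ∀ k : ℕ, 0 < k → q ^ k ≠ 1) :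
    (∑' m : ℕ, ∑' n : ℕ, q ^ (Qcap m n) * qPoch (q ^ 3) (q ^ 3) M *
        (qPoch q q m)⁻¹ * (qPoch (q ^ 3) (q ^ 3) n)⁻¹ * qPochInvZ (q ^ 3) ((M : ℤ) - 2 * n - m)) =
    ∑ j ∈ Finset.Icc (-(M : ℤ)) (M : ℤ),
      q ^ (3 * j ^ 2 + j) * qBinom (2 * (M : ℤ)) ((M : ℤ) + j) (q ^ 3) := by
  have hord : ¬IsOfFinOrder q := by simpa [isOfFinOrder_iff_pow_eq_one] using hroot
  have hord3 : ¬IsOfFinOrder (q ^ 3) := fun h ↦ hord (h.of_pow three_ne_zero)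
  rw [tsum_eq_finsum_capparelliSummand, ← finsum_trisectedSummand_eq_capparelli hq hord,
    finsum_trisectedSummand_eq_multinomial hq hord3,
    finsum_multinomialSummand_eq_binomial hq hord3, finsum_binomialSummand hq hord3,
    finsum_mul_qBinom_eq_sum_Icc]
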